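/- Giambelli formula for generalized Schur polynomials: for every partition λ with at most n parts, letting r = #{i : λ_i ≥ i} be the number of diagonal boxes of λ and λ′ the conjugate partition, one has S_λ(x_1,…,x_n|a,b) = det( S_{(λ_i − i | λ′_j − j)} )_{1 ≤ i,j ≤ r}. -/

import Mathlib

open Polynomial Matrix Finset

noncomputable section

variable {K L : Type*} [Field K] [Field L]

/-- The orthogonal-polynomial sequence: `φ₀ = 1`, `φ₁ = z - a 0`,
`φ_{i+1} = (z - a i)·φ_i - b i·φ_{i-1}` (so `φ_{-1} = 0`). -/
def phi (a b : ℤ → K) : ℕ → Polynomial K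
  | 0 => 1
  | 1 => Polynomial.X - Polynomial.C (a 0)
  | (i+2) => (Polynomial.X - Polynomial.C (a (i+1))) * phi a b (i+1)
      - Polynomial.C (b (i+1)) * phi a b i

/-- `φ` with integer index, `0` for negative index. -/
def phiZ (a b : ℤ → K) (m : ℤ) : Polynomial K :=
  if m < 0 then 0 else phi a b m.toNat

/-- Generalized Schur polynomial `S_λ(y₁,…,y_m|a,b)
  = det(φ_{λ_j+m-j}(y_i)) / ∏_{i<j}(y_i - y_j)` (indices here 0-based). -/
def genS (a b : ℤ → K) (c : K →+* L) {m : ℕ} (y : Fin m → L) (lam : Fin m → ℕ) : L :=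
  Matrix.det (Matrix.of fun i j : Fin m =>
      (phi a b (lam j + (m - 1 - (j : ℕ)))).eval₂ c (y i)) /
    ∏ i : Fin m, ∏ j ∈ Finset.Ioi i, (y i - y j)

/-- `h_i = S_{(i)}` for `i ≥ 0`, and `h_i = 0` for `i < 0`. -/
def genh (a b : ℤ → K) (c : K →+* L) {m : ℕ} (y : Fin m → L) (i : ℤ) : L :=
  if i < 0 then 0 else genS a b c y (fun j => if (j : ℕ) = 0 then i.toNat else 0)

/-- `h_i^{(0)} = h_i`, `h_i^{(r+1)} = h_{i+1}^{(r)} + a(i+m-1)h_i^{(r)} + b(i+m-1)h_{i-1}^{(r)}`. -/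
def genhr (a b : ℤ → K) (c : K →+* L) {m : ℕ} (y : Fin m → L) : ℕ → ℤ → L
  | 0, i => genh a b c y i
  | (r+1), i => genhr a b c y r (i+1) + c (a (i + m - 1)) * genhr a b c y r i
      + c (b (i + m - 1)) * genhr a b c y r (i-1)

/-- The field `F = K(x₁,…,x_n)`. -/
abbrev Fn (K : Type*) [Field K] (n : ℕ) := FractionRing (MvPolynomial (Fin n) K)

/-- The embedding `K → K(x₁,…,x_n)`. -/
def cK (K : Type*) [Field K] (n : ℕ) : K →+* Fn K n :=
  (algebraMap (MvPolynomial (Fin n) K) (Fn K n)).comp MvPolynomial.C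

/-- The variables `x₁,…,x_n` as elements of `K(x₁,…,x_n)`. -/
def xv (K : Type*) [Field K] (n : ℕ) (i : Fin n) : Fn K n :=
  algebraMap (MvPolynomial (Fin n) K) (Fn K n) (MvPolynomial.X i)

/-- The generalized Schur polynomial of the hook partition `(u+1, 1^v)`. -/
def genHook (a b : ℤ → K) (c : K →+* L) {m : ℕ} (y : Fin m → L) (u v : ℕ) : L :=
  genS a b c y (fun j : Fin m => if (j : ℕ) = 0 then u + 1 else if (j : ℕ) ≤ v then 1 else 0)

/-!
A generalized Schur polynomial is the quotient of two maximal minors of the semi-infinite matrix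
with columns `(φ_k(y_i))_i`, and such quotients do not change when this matrix is multiplied on the
left by an invertible matrix. So one may assume that its first `n` columns, read from right to left,
form the identity matrix. The minor of the hook `(u | v)` is then `(-1)^v` times the entry in row
`v` of column `u + n`. In the minor of `λ`, each row of `λ` that misses the diagonal contributes a
unit column, namely number `j - λ_j`. Deleting these columns and the corresponding rows leaves the
rows indexed by the leg lengths of the diagonal boxes, which are exactly the complement, and the
sign of the resulting permutation supplies the factors `(-1)^v`.
-/

section Determinant

variable {R : Type*} [CommRing R]

theorem det_eq_sign_mul_det_toSquareBlockProp {m : Type*} [Fintype m] [DecidableEq m]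
    (A : Matrix m m R) (σ : Equiv.Perm m) (p : m → Prop) [DecidablePred p]
    (hA : ∀ j, ¬p j → A.col j = Pi.single (σ j) 1) :
    A.det = Equiv.Perm.sign σ * ((A.submatrix σ id).toSquareBlockProp p).det := by
  have hentry : ∀ i j, ¬p j → A.submatrix σ id i j = (1 : Matrix m m R) i j := by
    intro i j hj
    have := congrFun (hA j hj) (σ i)
    simpa [Matrix.one_apply, Pi.single_apply] using this
  have hupper : ∀ i, p i → ∀ j, ¬p j → A.submatrix σ id i j = 0 := fun i hi j hj => by
    rw [hentry i j hj, Matrix.one_apply_ne (ne_of_apply_ne p fun hp => hj (hp ▸ hi))]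
  have hlower : ((A.submatrix σ id).toSquareBlockProp fun j => ¬p j) = 1 :=
    Matrix.ext fun i j => (hentry i j j.2).trans (by simp [Matrix.one_apply, Subtype.ext_iff])
  have hblock := Matrix.twoBlockTriangular_det' (A.submatrix σ id) p hupper
  rw [hlower, Matrix.det_one, mul_one, Matrix.det_permute] at hblock
  rw [← hblock, ← mul_assoc, ← Int.cast_mul, ← Units.val_mul, Int.units_mul_self]
  simp

theorem card_filter_Ioi_apply_lt {m : ℕ} (σ : Equiv.Perm (Fin m)) {i : Fin m}
    (hi : ∀ j < i, σ i < σ j) : #{j ∈ Ioi i | σ j < σ i} = (σ i : ℕ) := by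
  have hmap : ({j ∈ Ioi i | σ j < σ i}).map σ.toEmbedding = Iio (σ i) := by
    ext q
    simp only [mem_map_equiv, mem_filter, mem_Ioi, Equiv.apply_symm_apply, mem_Iio,
      and_iff_right_iff_imp]
    intro hq
    by_contra! hle
    rcases hle.lt_or_eq with hlt | heq
    · exact (hi _ hlt).not_gt (by simpa using hq)
    · simp [← heq] at hq
  rw [← Fin.card_Iio, ← hmap, card_map]

theorem sign_eq_prod_neg_one_pow_of_minima {m : ℕ} (σ : Equiv.Perm (Fin m)) (p : Fin m → Prop)
    [DecidablePred p] (hleft : ∀ i, p i → ∀ j < i, σ i < σ j)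
    (hright : ∀ i, ¬p i → ∀ j > i, σ i < σ j) :
    Equiv.Perm.sign σ = ∏ i : {i // p i}, (-1) ^ (σ i : ℕ) := by
  have hinv : ∀ i, (∏ j ∈ Ioi i, if σ i < σ j then (1 : ℤˣ) else -1)
      = if p i then (-1) ^ (σ i : ℕ) else 1 := by
    intro i
    split_ifs with hi
    · rw [← card_filter_Ioi_apply_lt σ (hleft i hi), prod_ite, prod_const_one, one_mul, prod_const]
      congr 2
      refine filter_congr fun j hj => ?_
      exact not_lt.trans (σ.injective.ne (mem_Ioi.mp hj).ne').le_iff_lt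
    · exact prod_eq_one fun j hj => if_pos (hright i hi j (mem_Ioi.mp hj))
  rw [Equiv.Perm.sign_eq_prod_prod_Ioi, prod_congr rfl fun i _ => hinv i, ← prod_filter,
    ← prod_subtype_eq_prod_filter, subtype_univ]

theorem det_eq_det_signed_of_minima {m : ℕ} (A : Matrix (Fin m) (Fin m) R)
    (σ : Equiv.Perm (Fin m)) (p : Fin m → Prop) [DecidablePred p]
    (hleft : ∀ i, p i → ∀ j < i, σ i < σ j) (hright : ∀ i, ¬p i → ∀ j > i, σ i < σ j)
    (hA : ∀ j, ¬p j → A.col j = Pi.single (σ j) 1) :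
    A.det = (Matrix.of fun i j : {i // p i} => (-1) ^ (σ j : ℕ) * A (σ j) i).det := by
  rw [det_eq_sign_mul_det_toSquareBlockProp A σ p hA,
    sign_eq_prod_neg_one_pow_of_minima σ p hleft hright, ← Matrix.det_transpose]
  push_cast
  rw [← Matrix.det_mul_row]
  rfl

theorem det_eval_rev_of_isMonicOfDegree {m : ℕ} (y : Fin m → R) (p : ℕ → R[X])
    (hp : ∀ k, IsMonicOfDegree (p k) k) :
    (Matrix.of fun i j : Fin m => (p j.rev).eval (y i)).det = ∏ i, ∏ j ∈ Ioi i, (y i - y j) := by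
  have hdet := Matrix.det_eval_matrixOfPolynomials_eq_det_vandermonde y (fun j => p j)
    (fun j => (hp j).natDegree_eq) fun j => (hp j).monic
  calc (Matrix.of fun i j : Fin m => (p j.rev).eval (y i)).det
      = ((Matrix.of fun i j : Fin m => (p j).eval (y i)).submatrix id Fin.revPerm).det := rfl
    _ = ((Matrix.vandermonde y).submatrix id Fin.revPerm).det := by
      rw [Matrix.det_permute', Matrix.det_permute', hdet]
    _ = (Matrix.projVandermonde 1 y).det := by
      congr 1
      ext i j
      simp [Matrix.projVandermonde_apply, Matrix.vandermonde_apply]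
    _ = ∏ i, ∏ j ∈ Ioi i, (y i - y j) := by
      simp [Matrix.det_projVandermonde]

end Determinant

section Partition

variable {n : ℕ} {lam : Fin n → ℕ}

/-- The part `λ'_{i+1}` of the partition conjugate to `λ = (lam 0, lam 1, …)`. -/
def conjPart (lam : Fin n → ℕ) (i : ℕ) : ℕ := #{k | i < lam k}

/-- The number of boxes on the main diagonal of `λ`. The rows meeting the diagonal are those
indices `k`, counted from `0`, with `k < lam k`. -/
def diagLength (lam : Fin n → ℕ) : ℕ := #{k : Fin n | (k : ℕ) < lam k}

/-- The hook partition `(u+1, 1^v)`; it is truncated to `n` parts if `v + 1 > n`. -/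
def hookPart (u v : ℕ) (j : Fin n) : ℕ :=
  if (j : ℕ) = 0 then u + 1 else if (j : ℕ) ≤ v then 1 else 0

theorem hookPart_zero (u v : ℕ) : hookPart u v (0 : Fin (n + 1)) = u + 1 :=
  rfl

theorem hookPart_succ_add (u : ℕ) (v : Fin (n + 1)) (k : Fin n) :
    hookPart u v k.succ + (n - k.succ) = n - v.succAbove k := by
  have hk := k.isLt
  simp only [hookPart, Fin.succAbove, Fin.lt_def, apply_ite Fin.val, Fin.val_succ,
    Fin.val_castSucc, Nat.add_one_ne_zero, if_false]
  split_ifs <;> omega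

theorem conjPart_le (lam : Fin n → ℕ) (i : ℕ) : conjPart lam i ≤ n :=
  (card_filter_le _ _).trans (by simp)

theorem diagLength_le (lam : Fin n → ℕ) : diagLength lam ≤ n :=
  (card_filter_le _ _).trans (by simp)

theorem conjPart_antitone (lam : Fin n → ℕ) : Antitone (conjPart lam) := fun _ _ hij =>
  card_le_card (monotone_filter_right _ fun _ _ => hij.trans_lt)

theorem lt_conjPart_iff (hanti : Antitone lam) {i : ℕ} {k : Fin n} :
    (k : ℕ) < conjPart lam i ↔ i < lam k :=
  Fin.lt_card_filter_univ_iff_apply_of_imp _ fun _ _ hjk h => h.trans_le (hanti hjk)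

theorem lt_diagLength_iff (hanti : Antitone lam) {k : Fin n} :
    (k : ℕ) < diagLength lam ↔ (k : ℕ) < lam k :=
  Fin.lt_card_filter_univ_iff_apply_of_imp (fun k : Fin n => (k : ℕ) < lam k)
    fun _ _ hjk h => (Fin.le_def.mp hjk).trans_lt (h.trans_le (hanti hjk))

/-- The rows of `λ` meeting the diagonal, as an initial segment of the rows. -/
def diagRowEquiv (hanti : Antitone lam) :
    Fin (diagLength lam) ≃ {k : Fin n // (k : ℕ) < lam k} :=
  (Fin.castLEquiv (diagLength_le lam)).trans
    (Equiv.subtypeEquivRight fun _ => lt_diagLength_iff hanti)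

/-- The leg length of the diagonal box in row `j` of `λ` if there is one, and `j - λ_j` otherwise.
These are the Frobenius coordinates `β_j` of `λ` followed by their complement in `{0, …, n-1}`. -/
def legIndex (lam : Fin n → ℕ) (j : Fin n) : ℕ :=
  if (j : ℕ) < lam j then conjPart lam j - (j + 1) else j - lam j

theorem legIndex_lt (lam : Fin n → ℕ) (j : Fin n) : legIndex lam j < n := by
  have := conjPart_le lam j
  unfold legIndex
  split_ifs <;> omega

theorem legIndex_lt_legIndex_of_lt_apply (hanti : Antitone lam) {i j : Fin n} (hij : i < j)
    (hj : (j : ℕ) < lam j) : legIndex lam j < legIndex lam i := by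
  have hval := Fin.lt_def.mp hij
  have hi : (i : ℕ) < lam i := hval.trans (hj.trans_le (hanti hij.le))
  have hleg : (j : ℕ) < conjPart lam j := (lt_conjPart_iff hanti).mpr hj
  have hconj : conjPart lam j ≤ conjPart lam i := conjPart_antitone lam hval.le
  rw [legIndex, legIndex, if_pos hi, if_pos hj]
  omega

theorem legIndex_lt_legIndex_of_apply_le (hanti : Antitone lam) {i j : Fin n} (hij : i < j)
    (hi : lam i ≤ i) : legIndex lam i < legIndex lam j := by
  have hlam : lam j ≤ lam i := hanti hij.le
  rw [Fin.lt_def] at hij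
  rw [legIndex, legIndex, if_neg (by omega), if_neg (by omega)]
  omega

theorem legIndex_ne_legIndex (hanti : Antitone lam) {i j : Fin n} (hi : (i : ℕ) < lam i)
    (hj : lam j ≤ j) : legIndex lam i ≠ legIndex lam j := by
  -- Equality would give `λ_j + λ'_i = i + j + 1`, but the left side is at least `i + j + 2` if the
  -- box `(j, i)` lies in `λ`, and at most `i + j` otherwise.
  have hleg : (i : ℕ) < conjPart lam i := (lt_conjPart_iff hanti).mpr hi
  have hbox : (j : ℕ) < conjPart lam i ↔ (i : ℕ) < lam j := lt_conjPart_iff hanti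
  rw [legIndex, legIndex, if_pos hi, if_neg (by omega)]
  omega

theorem legIndex_injective (hanti : Antitone lam) : Function.Injective (legIndex lam) := by
  refine Function.Injective.of_lt_imp_ne fun i j hij => ?_
  rcases lt_or_ge (i : ℕ) (lam i) with hi | hi
  · rcases lt_or_ge (j : ℕ) (lam j) with hj | hj
    · exact (legIndex_lt_legIndex_of_lt_apply hanti hij hj).ne'
    · exact legIndex_ne_legIndex hanti hi hj
  · exact (legIndex_lt_legIndex_of_apply_le hanti hij hi).ne

/-- `legIndex` as a permutation of the rows. -/
def legPerm (hanti : Antitone lam) : Equiv.Perm (Fin n) :=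
  Equiv.ofBijective (fun j => ⟨legIndex lam j, legIndex_lt lam j⟩) <|
    Finite.injective_iff_bijective.mp fun _ _ h => legIndex_injective hanti (Fin.val_eq_of_eq h)

theorem val_legPerm (hanti : Antitone lam) (j : Fin n) : (legPerm hanti j : ℕ) = legIndex lam j :=
  rfl

end Partition

section SchurMinor

variable {R : Type*} [CommRing R] {n : ℕ}

/-- The minor of the semi-infinite matrix with columns `C 0, C 1, …` on the columns
`λ_1 + n - 1, λ_2 + n - 2, …, λ_n`. Generalized Schur polynomials are quotients of such minors. -/
def schurMinor (C : ℕ → Fin n → R) (lam : Fin n → ℕ) : R :=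
  (Matrix.of fun i j : Fin n => C (lam j + (n - 1 - j)) i).det

theorem schurMinor_mulVec (A : Matrix (Fin n) (Fin n) R) (C : ℕ → Fin n → R) (lam : Fin n → ℕ) :
    schurMinor (fun k => A *ᵥ C k) lam = A.det * schurMinor C lam := by
  rw [schurMinor, schurMinor, ← Matrix.det_mul]
  rfl

theorem schurMinor_hookPart {C : ℕ → Fin n → R} (hC : ∀ q : Fin n, C (n - 1 - q) = Pi.single q 1)
    (u : ℕ) (v : Fin n) : schurMinor C (hookPart u v) = (-1) ^ (v : ℕ) * C (u + n) v := by
  obtain _ | n := n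
  · exact v.elim0
  have hunit : ∀ q : Fin (n + 1), C (n - q) = Pi.single q 1 := hC
  -- Up to a cycle of the columns, the matrix is the identity with its column `v` replaced.
  have hcols : (Matrix.of fun i j : Fin (n + 1) => C (hookPart u v j + (n + 1 - 1 - j)) i) =
      ((1 : Matrix (Fin (n + 1)) (Fin (n + 1)) R).updateCol v (C (u + (n + 1)))).submatrix id
        v.cycleRange.symm := by
    ext i j
    cases j using Fin.cases with
    | zero => simp [hookPart_zero, add_right_comm u 1 n, add_assoc]
    | succ k =>
      rw [Matrix.of_apply, Nat.add_sub_cancel, hookPart_succ_add, hunit]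
      simp [Matrix.one_apply, Pi.single_apply]
  rw [schurMinor, hcols, Matrix.det_permute', Equiv.Perm.sign_symm, Fin.sign_cycleRange,
    ← Matrix.cramer_apply, Matrix.cramer_one]
  simp

theorem schurMinor_giambelli {C : ℕ → Fin n → R}
    (hC : ∀ q : Fin n, C (n - 1 - q) = Pi.single q 1) {lam : Fin n → ℕ} (hanti : Antitone lam) :
    schurMinor C lam = (Matrix.of fun i j : {k : Fin n // (k : ℕ) < lam k} =>
      schurMinor C (hookPart (lam i - (i + 1)) (conjPart lam j - (j + 1)))).det := by
  have hcol : ∀ j : Fin n, ¬(j : ℕ) < lam j →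
      C (lam j + (n - 1 - j)) = Pi.single (legPerm hanti j) 1 := by
    intro j hj
    rw [← hC, val_legPerm, legIndex, if_neg hj]
    congr 1
    omega
  refine (det_eq_det_signed_of_minima _ (legPerm hanti) (fun j => (j : ℕ) < lam j)
    (fun _ hi _ hji => legIndex_lt_legIndex_of_lt_apply hanti hji hi)
    (fun _ hi _ hij => legIndex_lt_legIndex_of_apply_le hanti hij (not_lt.mp hi)) hcol).trans ?_
  congr 1
  ext ⟨i, hi⟩ ⟨j, hj⟩
  have hleg : conjPart lam j - (j + 1) = legPerm hanti j := by
    rw [val_legPerm, legIndex, if_pos hj]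
  have harm : lam i + (n - 1 - i) = lam i - (i + 1) + n := by omega
  simp only [Matrix.of_apply, hleg, schurMinor_hookPart hC, harm]

theorem schurMinor_div_giambelli {F : Type*} [Field F] {C : ℕ → Fin n → F} (hC : schurMinor C 0 ≠ 0)
    {lam : Fin n → ℕ} (hanti : Antitone lam) :
    schurMinor C lam / schurMinor C 0 = (Matrix.of fun i j : {k : Fin n // (k : ℕ) < lam k} =>
      schurMinor C (hookPart (lam i - (i + 1)) (conjPart lam j - (j + 1))) /
        schurMinor C 0).det := by
  let M : Matrix (Fin n) (Fin n) F := Matrix.of fun i j => C (n - 1 - j) i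
  have hM : M.det = schurMinor C 0 := by simp [M, schurMinor]
  have hdiv : ∀ mu, schurMinor C mu / schurMinor C 0 = schurMinor (fun k => M⁻¹ *ᵥ C k) mu := by
    intro mu
    rw [schurMinor_mulVec, Matrix.det_nonsing_inv, Ring.inverse_eq_inv', hM, div_eq_inv_mul]
  have hnorm : ∀ q : Fin n, M⁻¹ *ᵥ C (n - 1 - q) = Pi.single q 1 := by
    intro q
    have hcol : C (n - 1 - q) = M *ᵥ Pi.single q 1 := (Matrix.mulVec_single_one M q).symm
    rw [hcol, Matrix.mulVec_mulVec, Matrix.nonsing_inv_mul _ (hM ▸ hC.isUnit), Matrix.one_mulVec]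
  simp only [hdiv]
  exact schurMinor_giambelli hnorm hanti

end SchurMinor

theorem isMonicOfDegree_phi (a b : ℤ → K) (k : ℕ) : IsMonicOfDegree (phi a b k) k := by
  induction k using Nat.twoStepInduction with
  | zero => exact isMonicOfDegree_zero_iff.mpr rfl
  | one => exact isMonicOfDegree_X_sub_one (a 0)
  | more k ih ih' =>
    have hlead : IsMonicOfDegree ((X - C (a (k + 1))) * phi a b (k + 1)) (k + 2) := by
      simpa only [add_comm 1, add_assoc] using (isMonicOfDegree_X_sub_one (a (k + 1))).mul ih'
    refine hlead.sub ((natDegree_C_mul_le _ _).trans_lt ?_)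
    rw [ih.natDegree_eq]
    omega

/-- The column `(φ_k(y₁), …, φ_k(y_m))`, the `k`-th column of the semi-infinite matrix whose minors
are the numerators and the denominator of the generalized Schur polynomials. -/
def phiCol (a b : ℤ → K) (c : K →+* L) {m : ℕ} (y : Fin m → L) (k : ℕ) (i : Fin m) : L :=
  (phi a b k).eval₂ c (y i)

theorem schurMinor_phiCol_zero (a b : ℤ → K) (c : K →+* L) {m : ℕ} (y : Fin m → L) :
    schurMinor (phiCol a b c y) 0 = ∏ i, ∏ j ∈ Ioi i, (y i - y j) := by
  rw [← det_eval_rev_of_isMonicOfDegree y (fun k => (phi a b k).map c) fun k =>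
    ⟨((phi a b k).natDegree_map c).trans (isMonicOfDegree_phi a b k).natDegree_eq,
      (isMonicOfDegree_phi a b k).monic.map c⟩]
  simp [schurMinor, phiCol, eval_map, Fin.val_rev, Nat.sub_sub, add_comm 1]

theorem schurMinor_phiCol_zero_ne_zero (a b : ℤ → K) (c : K →+* L) {m : ℕ} {y : Fin m → L}
    (hy : Function.Injective y) : schurMinor (phiCol a b c y) 0 ≠ 0 := by
  rw [schurMinor_phiCol_zero]
  exact prod_ne_zero_iff.mpr fun i _ => prod_ne_zero_iff.mpr fun j hj =>
    sub_ne_zero.mpr (hy.ne (mem_Ioi.mp hj).ne)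

theorem genS_eq_schurMinor_div (a b : ℤ → K) (c : K →+* L) {m : ℕ} (y : Fin m → L)
    (lam : Fin m → ℕ) :
    genS a b c y lam = schurMinor (phiCol a b c y) lam / schurMinor (phiCol a b c y) 0 := by
  rw [schurMinor_phiCol_zero]
  rfl

theorem genHook_eq_genS_hookPart (a b : ℤ → K) (c : K →+* L) {m : ℕ} (y : Fin m → L) (u v : ℕ) :
    genHook a b c y u v = genS a b c y (hookPart u v) :=
  rfl

theorem generalized_giambelli_general (a b : ℤ → K) (c : K →+* L) {n : ℕ} {y : Fin n → L}
    (hy : Function.Injective y) {lam : Fin n → ℕ} (hanti : Antitone lam) :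
    genS a b c y lam = (Matrix.of fun i j : Fin (diagLength lam) =>
      genHook a b c y (lam (Fin.castLE (diagLength_le lam) i) - (i + 1))
        (conjPart lam j - (j + 1))).det := by
  simp only [genHook_eq_genS_hookPart, genS_eq_schurMinor_div]
  rw [schurMinor_div_giambelli (schurMinor_phiCol_zero_ne_zero a b c hy) hanti,
    ← Matrix.det_submatrix_equiv_self (diagRowEquiv hanti)]
  rfl

theorem xv_injective (K : Type*) [Field K] (n : ℕ) : Function.Injective (xv K n) :=
  (IsFractionRing.injective (MvPolynomial (Fin n) K) (Fn K n)).comp MvPolynomial.X_injective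

/-- **Giambelli formula for generalized Schur polynomials.**
For a partition `λ` with at most `n` parts, with `r = #{i : λ_i ≥ i}` diagonal boxes and
conjugate `λ'`, one has `S_λ(x|a,b) = det( S_{(λ_i - i | λ'_j - j)} )_{1 ≤ i,j ≤ r}`. -/
theorem generalized_giambelli (K : Type*) [Field K] (a b : ℤ → K) (n : ℕ) (hn : 1 ≤ n)
    (lam : Fin n → ℕ) (hanti : Antitone lam) :
    genS a b (cK K n) (xv K n) lam =
      Matrix.det (Matrix.of fun i j :
          Fin ((Finset.univ.filter fun k : Fin n => (k : ℕ) + 1 ≤ lam k).card) =>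
        genHook a b (cK K n) (xv K n)
          (lam (Fin.castLE (le_trans (Finset.card_filter_le _ _) (by simp)) i) - ((i : ℕ) + 1))
          ((Finset.univ.filter fun k : Fin n => (j : ℕ) + 1 ≤ lam k).card - ((j : ℕ) + 1))) :=
  generalized_giambelli_general a b (cK K n) (xv_injective K n) hanti
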